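/- Let p ∈ [1/2, 1). There exists a constant C > 0 such that for all n ≥ 1 and all x ≥ 0, the upper tail of the standardized binomial distribution is dominated by the Gaussian upper tail: Σ_{k : 0 ≤ k ≤ n, z_{n,k} > x} f_{n,k} ≤ C · ∫_x^∞ φ(t) dt. -/

import Mathlib

open MeasureTheory Filter

/-- The standard normal density. -/
noncomputable def normalPdf (x : ℝ) : ℝ := Real.exp (-x ^ 2 / 2) / Real.sqrt (2 * Real.pi)

/-- Binomial probabilities `f_{n,k} = (n choose k) p^k (1-p)^(n-k)`. -/
noncomputable def binProb (p : ℝ) (n k : ℕ) : ℝ := (n.choose k : ℝ) * p ^ k * (1 - p) ^ (n - k)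

/-- Standardized points `z_{n,k} = (k - np)/√(np(1-p))` (also used for `k = n+1`, `k = -1`). -/
noncomputable def zpt (p : ℝ) (n : ℕ) (k : ℤ) : ℝ :=
  ((k : ℝ) - n * p) / Real.sqrt (n * p * (1 - p))




/-!
Write `s = √(np(1-p))`, `z = z_{n,k}` and `y = k - np = s z`. The ratio of consecutive binomial
probabilities is `(1 - u) / (1 + v)` with `u = y / (n(1-p))` and `v = (y+1) / (np)`. Taylor
expansion to second order turns it into `exp (-(u + u²/2 + v - v²/2))`, whereas the corresponding
ratio of Gaussian densities is `exp (-(2y+1) / (2s²))`. The two exponents differ by a term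
proportional to `(2p - 1)(z² - 1)`, which has the right sign because `p ≥ 1/2` and `z ≥ 1`, and by
an error of at most `2/n`. So beyond one standard deviation `f_{n,k} / φ(z_{n,k})` grows by a factor
of at most `exp 2` altogether. Just beyond one standard deviation this ratio is `O(1/s)`, because
`f_{n,·}` decreases to the right of the mean and sums to one. Hence `f_{n,k} = O(φ(z_{n,k}) / s)`,
and `φ(z_{n,k}) / s` is at most a constant times the integral of `φ` over
`(z_{n,k}, z_{n,k+1}]`. All constants are uniform in `p ∈ [1/2, 1)`.
-/

section Exp

lemma one_sub_le_exp_neg_sub_sq {u : ℝ} (hu : 0 ≤ u) : 1 - u ≤ Real.exp (-u - u ^ 2 / 2) := by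
  rcases lt_or_ge u 1 with hu1 | hu1
  · have partial_sum_le :=
      sum_le_hasSum (Finset.range 2) (fun i _ => by positivity)
        (Real.hasSum_pow_div_log_of_abs_lt_one (abs_lt.2 ⟨by linarith, hu1⟩))
    norm_num [Finset.sum_range_succ] at partial_sum_le
    rw [← Real.log_le_iff_le_exp (by linarith)]
    linarith
  · exact (sub_nonpos.2 hu1).trans (Real.exp_nonneg _)

lemma exp_sub_sq_le_one_add {v : ℝ} (hv : 0 ≤ v) : Real.exp (v - v ^ 2 / 2) ≤ 1 + v := by
  rw [← Real.le_log_iff_exp_le (by linarith)]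
  refine le_trans ?_ (Real.le_log_one_add_of_nonneg hv)
  rw [le_div_iff₀ (by linarith)]
  nlinarith [pow_nonneg hv 3]

end Exp

section NormalPdf

lemma normalPdf_eq_gaussianPDFReal : normalPdf = ProbabilityTheory.gaussianPDFReal 0 1 := by
  ext x
  simp [normalPdf, ProbabilityTheory.gaussianPDFReal, div_eq_inv_mul]

lemma integrable_normalPdf : Integrable normalPdf :=
  normalPdf_eq_gaussianPDFReal ▸ ProbabilityTheory.integrable_gaussianPDFReal 0 1

lemma normalPdf_pos (x : ℝ) : 0 < normalPdf x :=
  normalPdf_eq_gaussianPDFReal ▸ ProbabilityTheory.gaussianPDFReal_pos 0 1 x one_ne_zero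

lemma antitoneOn_normalPdf : AntitoneOn normalPdf (Set.Ici 0) := by
  intro a ha b _ hab
  have sq_le : a ^ 2 ≤ b ^ 2 := pow_le_pow_left₀ ha hab 2
  unfold normalPdf
  gcongr

lemma normalPdf_eq_exp_mul (a b : ℝ) :
    normalPdf a = Real.exp ((b ^ 2 - a ^ 2) / 2) * normalPdf b := by
  unfold normalPdf
  rw [← mul_div_assoc, ← Real.exp_add]
  ring_nf

lemma setIntegral_Ioi_normalPdf_pos (x : ℝ) : 0 < ∫ t in Set.Ioi x, normalPdf t := by
  rw [setIntegral_pos_iff_support_of_nonneg_ae (.of_forall fun t => (normalPdf_pos t).le)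
    integrable_normalPdf.integrableOn,
    Function.support_eq_univ fun t => (normalPdf_pos t).ne']
  simp

lemma setIntegral_normalPdf_mono {S T : Set ℝ} (h : S ⊆ T) :
    ∫ t in S, normalPdf t ≤ ∫ t in T, normalPdf t :=
  setIntegral_mono_set integrable_normalPdf.integrableOn
    (.of_forall fun t => (normalPdf_pos t).le) (.of_forall h)

lemma sub_mul_normalPdf_le_setIntegral_Ioc {a b : ℝ} (ha : 0 ≤ a) (hab : a ≤ b) :
    (b - a) * normalPdf b ≤ ∫ t in Set.Ioc a b, normalPdf t := by
  have h := setIntegral_ge_of_const_le_real (μ := volume) (f := normalPdf) measurableSet_Ioc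
    measure_Ioc_lt_top.ne
    (fun t ht => antitoneOn_normalPdf (ha.trans ht.1.le) (ha.trans hab) ht.2)
    integrable_normalPdf.integrableOn
  rwa [Real.volume_real_Ioc_of_le hab, mul_comm] at h

end NormalPdf

lemma sum_setIntegral_Ioc_succ_le {μ : Measure ℝ} {f : ℝ → ℝ} {x : ℝ} {z : ℕ → ℝ} {F : Finset ℕ}
    (hf : IntegrableOn f (Set.Ioi x) μ) (hf0 : 0 ≤ f) (hz : Monotone z)
    (hF : ∀ k ∈ F, x ≤ z k) :
    ∑ k ∈ F, ∫ t in Set.Ioc (z k) (z (k + 1)), f t ∂μ ≤ ∫ t in Set.Ioi x, f t ∂μ := by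
  have Ioc_subset : ∀ k ∈ F, Set.Ioc (z k) (z (k + 1)) ⊆ Set.Ioi x :=
    fun k hk t ht => (hF k hk).trans_lt ht.1
  have sum_eq := integral_biUnion_finset F (fun _ _ => measurableSet_Ioc)
    (hz.pairwise_disjoint_on_Ioc_succ.set_pairwise _)
    (fun k hk => hf.mono_set (Ioc_subset k hk))
  refine sum_eq.symm.trans_le ?_
  exact setIntegral_mono_set hf (.of_forall hf0) (.of_forall (Set.iUnion₂_subset Ioc_subset))

section BinProb

variable {p : ℝ} {n k m : ℕ}

lemma binProb_nonneg (hp0 : 0 ≤ p) (hp1 : p ≤ 1) (n k : ℕ) : 0 ≤ binProb p n k := by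
  have := sub_nonneg.2 hp1
  unfold binProb
  positivity

lemma sum_range_binProb (p : ℝ) (n : ℕ) : ∑ k ∈ Finset.range (n + 1), binProb p n k = 1 := by
  calc ∑ k ∈ Finset.range (n + 1), binProb p n k
      = (p + (1 - p)) ^ n := by
        rw [add_pow]
        exact Finset.sum_congr rfl fun k _ => by unfold binProb; ring
    _ = 1 := by simp

lemma sum_binProb_le_one (hp0 : 0 ≤ p) (hp1 : p ≤ 1) {F : Finset ℕ}
    (hF : F ⊆ Finset.range (n + 1)) : ∑ k ∈ F, binProb p n k ≤ 1 :=
  sum_range_binProb p n ▸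
    Finset.sum_le_sum_of_subset_of_nonneg hF fun k _ _ => binProb_nonneg hp0 hp1 n k

lemma binProb_succ_mul (p : ℝ) (hk : k < n) :
    binProb p n (k + 1) * ((k + 1) * (1 - p)) = binProb p n k * ((n - k) * p) := by
  obtain ⟨d, rfl⟩ := Nat.exists_eq_add_of_lt hk
  have choose_succ_mul : ((k + d + 1).choose (k + 1) : ℝ) * (k + 1)
      = (k + d + 1).choose k * (d + 1) := by
    have h := Nat.choose_succ_right_eq (k + d + 1) k
    rw [show k + d + 1 - k = d + 1 by omega] at h
    exact_mod_cast h
  unfold binProb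
  rw [show k + d + 1 - (k + 1) = d by omega, show k + d + 1 - k = d + 1 by omega]
  push_cast
  linear_combination p ^ (k + 1) * (1 - p) ^ (d + 1) * choose_succ_mul

lemma binProb_succ_le (hp0 : 0 ≤ p) (hp1 : p < 1) (hk : k < n) (hmean : n * p ≤ k) :
    binProb p n (k + 1) ≤ binProb p n k := by
  have : 0 < 1 - p := sub_pos.2 hp1
  refine le_of_mul_le_mul_right ?_ (show 0 < ((k : ℝ) + 1) * (1 - p) by positivity)
  rw [binProb_succ_mul p hk]
  refine mul_le_mul_of_nonneg_left ?_ (binProb_nonneg hp0 hp1.le n k)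
  linarith

lemma binProb_le_of_le (hp0 : 0 ≤ p) (hp1 : p < 1) (hmk : m ≤ k) (hk : k ≤ n)
    (hmean : n * p ≤ m) : binProb p n k ≤ binProb p n m := by
  induction k, hmk using Nat.le_induction with
  | base => rfl
  | succ k hmk ih =>
    exact (binProb_succ_le hp0 hp1 hk (hmean.trans (mod_cast hmk))).trans (ih (by omega))

/- The terms with index between the mean and `k` are each at least `f_{n,k}`, there are more than
`k - np` of them, and they sum to at most one. -/
lemma binProb_mul_sub_le_one (hp0 : 0 ≤ p) (hp1 : p < 1) (hk : k ≤ n) (hmean : n * p ≤ k) :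
    binProb p n k * (k - n * p) ≤ 1 := by
  set c := ⌈n * p⌉₊
  have hc : (c : ℝ) < n * p + 1 := Nat.ceil_lt_add_one (by positivity)
  have hck : c ≤ k := Nat.ceil_le.2 hmean
  calc binProb p n k * (k - n * p)
      ≤ binProb p n k * (Finset.Icc c k).card := by
        refine mul_le_mul_of_nonneg_left ?_ (binProb_nonneg hp0 hp1.le n k)
        rw [Nat.card_Icc, Nat.cast_sub (by omega)]
        push_cast
        linarith
    _ ≤ ∑ j ∈ Finset.Icc c k, binProb p n j := by
        rw [mul_comm, ← nsmul_eq_mul]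
        refine Finset.card_nsmul_le_sum _ _ _ fun j hj => ?_
        obtain ⟨hcj, hjk⟩ := Finset.mem_Icc.1 hj
        exact binProb_le_of_le hp0 hp1 hjk hk (Nat.ceil_le.1 hcj)
    _ ≤ 1 := by
        refine sum_binProb_le_one hp0 hp1.le fun j hj => ?_
        simp only [Finset.mem_Icc, Finset.mem_range] at hj ⊢
        omega

lemma binProb_succ_le_mul_exp (hp0 : 0 < p) (hp1 : p < 1) (hk : k < n) (hmean : n * p ≤ k) :
    binProb p n (k + 1) ≤ binProb p n k *
      Real.exp (-((k - n * p) / (n * (1 - p)) + ((k - n * p) / (n * (1 - p))) ^ 2 / 2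
        + (k - n * p + 1) / (n * p) - ((k - n * p + 1) / (n * p)) ^ 2 / 2)) := by
  have hq : 0 < 1 - p := sub_pos.2 hp1
  have hn : (0 : ℝ) < n := mod_cast Nat.zero_lt_of_lt hk
  have : 0 ≤ k - n * p := sub_nonneg.2 hmean
  have hf := binProb_nonneg hp0.le hp1.le n k
  have hf' := binProb_nonneg hp0.le hp1.le n (k + 1)
  set u := (k - n * p) / (n * (1 - p)) with hu
  set v := (k - n * p + 1) / (n * p) with hv
  have succ_mul_one_add : binProb p n (k + 1) * (1 + v) = binProb p n k * (1 - u) := by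
    have one_add_eq : 1 + v = (k + 1) * (1 - p) / (n * p * (1 - p)) := by
      rw [hv]; field_simp; ring
    have one_sub_eq : 1 - u = (n - k) * p / (n * p * (1 - p)) := by
      rw [hu]; field_simp; ring
    rw [one_add_eq, one_sub_eq, ← mul_div_assoc, ← mul_div_assoc, binProb_succ_mul p hk]
  have key : binProb p n (k + 1) * Real.exp (v - v ^ 2 / 2)
      ≤ binProb p n k * Real.exp (-u - u ^ 2 / 2) :=
    calc binProb p n (k + 1) * Real.exp (v - v ^ 2 / 2)
        ≤ binProb p n (k + 1) * (1 + v) := by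
          gcongr; exact exp_sub_sq_le_one_add (by positivity)
      _ = binProb p n k * (1 - u) := succ_mul_one_add
      _ ≤ binProb p n k * Real.exp (-u - u ^ 2 / 2) := by
          gcongr; exact one_sub_le_exp_neg_sub_sq (by positivity)
  rw [← le_div_iff₀ (Real.exp_pos _), mul_div_assoc, ← Real.exp_sub] at key
  exact key.trans_eq (by ring_nf)

end BinProb

section Zpt

variable {p : ℝ} {n k : ℕ}

lemma monotone_zpt (p : ℝ) (n : ℕ) : Monotone (zpt p n) := by
  intro a b hab
  have : (a : ℝ) ≤ b := mod_cast hab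
  unfold zpt
  gcongr

lemma zpt_add_one (p : ℝ) (n : ℕ) (k : ℤ) :
    zpt p n (k + 1) = zpt p n k + 1 / √(n * p * (1 - p)) := by
  unfold zpt
  push_cast
  ring

lemma sq_zpt (hp0 : 0 ≤ p) (hp1 : p ≤ 1) (n : ℕ) (k : ℤ) :
    zpt p n k ^ 2 = (k - n * p) ^ 2 / (n * p * (1 - p)) := by
  have := sub_nonneg.2 hp1
  unfold zpt
  rw [div_pow, Real.sq_sqrt (by positivity)]

lemma sq_zpt_add_one_sub (hp0 : 0 ≤ p) (hp1 : p ≤ 1) (n : ℕ) (k : ℤ) :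
    zpt p n (k + 1) ^ 2 - zpt p n k ^ 2 = (2 * (k - n * p) + 1) / (n * p * (1 - p)) := by
  rw [sq_zpt hp0 hp1, sq_zpt hp0 hp1, ← sub_div]
  push_cast
  ring

lemma sqrt_variance_pos (hp0 : 0 < p) (hp1 : p < 1) (hn : 0 < n) : 0 < √(n * p * (1 - p)) := by
  have := sub_pos.2 hp1
  positivity

lemma one_le_zpt_iff (hp0 : 0 < p) (hp1 : p < 1) (hn : 0 < n) (k : ℤ) :
    1 ≤ zpt p n k ↔ √(n * p * (1 - p)) ≤ k - n * p :=
  one_le_div₀ (sqrt_variance_pos hp0 hp1 hn)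

lemma mean_le_of_zpt_nonneg (hp0 : 0 < p) (hp1 : p < 1) (hn : 0 < n) {k : ℤ}
    (hz : 0 ≤ zpt p n k) : n * p ≤ k := by
  rw [zpt, le_div_iff₀ (sqrt_variance_pos hp0 hp1 hn), zero_mul] at hz
  linarith

lemma le_sqrt_variance_of_one_le_zpt (hp0 : 0 < p) (hp1 : p < 1) (hn : 0 < n) (hk : k ≤ n)
    (hz : 1 ≤ zpt p n k) : p ≤ √(n * p * (1 - p)) := by
  have hs := sqrt_variance_pos hp0 hp1 hn
  have hq := sub_pos.2 hp1
  have hkn : (k : ℝ) ≤ n := mod_cast hk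
  rw [one_le_zpt_iff hp0 hp1 hn, Int.cast_natCast] at hz
  refine le_of_mul_le_mul_right ?_ hs
  calc p * √(n * p * (1 - p)) ≤ p * (n * (1 - p)) := by gcongr; linarith
    _ = √(n * p * (1 - p)) * √(n * p * (1 - p)) := by
        rw [Real.mul_self_sqrt (by positivity)]; ring

lemma exists_le_one_le_zpt_le (hp0 : 0 < p) (hp1 : p < 1) (hn : 0 < n) (hz : 1 ≤ zpt p n k) :
    ∃ m ≤ k, 1 ≤ zpt p n m ∧ zpt p n m ≤ 1 + 1 / √(n * p * (1 - p)) := by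
  have hs := sqrt_variance_pos hp0 hp1 hn
  rw [one_le_zpt_iff hp0 hp1 hn, Int.cast_natCast] at hz
  refine ⟨⌈n * p + √(n * p * (1 - p))⌉₊, Nat.ceil_le.2 (by linarith), ?_, ?_⟩
  · rw [one_le_zpt_iff hp0 hp1 hn, Int.cast_natCast]
    linarith [Nat.le_ceil (n * p + √(n * p * (1 - p)))]
  · rw [zpt, one_add_div hs.ne', Int.cast_natCast]
    gcongr
    linarith [Nat.ceil_lt_add_one (show 0 ≤ n * p + √(n * p * (1 - p)) by positivity)]

lemma normalPdf_zpt_le_exp_mul (hp : 1 / 2 ≤ p) (hp1 : p < 1) (hn : 0 < n) (hk : k ≤ n)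
    (hz : 1 ≤ zpt p n k) :
    normalPdf (zpt p n k) ≤ Real.exp 4 * normalPdf (zpt p n (k + 1)) := by
  have hp0 : 0 < p := by linarith
  have hq := sub_pos.2 hp1
  have hn' : (0 : ℝ) < n := mod_cast hn
  have hkn : (k : ℝ) ≤ n := mod_cast hk
  have variance_ge : p ^ 2 ≤ n * p * (1 - p) :=
    (Real.le_sqrt' hp0).1 (le_sqrt_variance_of_one_le_zpt hp0 hp1 hn hk hz)
  rw [normalPdf_eq_exp_mul _ (zpt p n (k + 1)), sq_zpt_add_one_sub hp0.le hp1.le]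
  refine mul_le_mul_of_nonneg_right (Real.exp_le_exp.2 ?_) (normalPdf_pos _).le
  rw [div_div, div_le_iff₀ (by positivity), Int.cast_natCast]
  have : n * (1 - p) ≤ 2 * (n * p * (1 - p)) := by nlinarith [mul_pos hn' hq]
  nlinarith

lemma normalPdf_zpt_div_sqrt_le_setIntegral (hp : 1 / 2 ≤ p) (hp1 : p < 1) (hn : 0 < n)
    (hk : k ≤ n) (hz : 1 ≤ zpt p n k) :
    normalPdf (zpt p n k) / √(n * p * (1 - p)) ≤
      Real.exp 4 * ∫ t in Set.Ioc (zpt p n k) (zpt p n (k + 1)), normalPdf t := by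
  have rectangle_le := sub_mul_normalPdf_le_setIntegral_Ioc (zero_le_one.trans hz)
    (monotone_zpt p n (show (k : ℤ) ≤ k + 1 by omega))
  rw [zpt_add_one, add_sub_cancel_left, ← zpt_add_one] at rectangle_le
  calc normalPdf (zpt p n k) / √(n * p * (1 - p))
      ≤ Real.exp 4 * normalPdf (zpt p n (k + 1)) / √(n * p * (1 - p)) := by
        gcongr; exact normalPdf_zpt_le_exp_mul hp hp1 hn hk hz
    _ = Real.exp 4 * (1 / √(n * p * (1 - p)) * normalPdf (zpt p n (k + 1))) := by ring
    _ ≤ Real.exp 4 * ∫ t in Set.Ioc (zpt p n k) (zpt p n (k + 1)), normalPdf t := by gcongr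

end Zpt

/-- The ratio `f_{n,k} / φ(z_{n,k})` of a binomial probability to the standard normal density at
the corresponding standardized point. It measures how well the local Gaussian approximation holds;
the lattice spacing `1 / √(np(1-p))` is not divided out. -/
noncomputable def binGaussRatio (p : ℝ) (n k : ℕ) : ℝ := binProb p n k / normalPdf (zpt p n k)

section BinGaussRatio

variable {p : ℝ} {n k m : ℕ}

lemma binGaussRatio_eq_mul_exp (p : ℝ) (n k : ℕ) :
    binGaussRatio p n k = √(2 * Real.pi) * (binProb p n k * Real.exp (zpt p n k ^ 2 / 2)) := by
  rw [binGaussRatio, normalPdf, neg_div, Real.exp_neg]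
  field_simp

/- Here `N` is the number of trials and `y` the deviation from the mean, by `hvar` at least one
standard deviation. -/
lemma gaussian_exponent_le {N y : ℝ} (hp : 1 / 2 ≤ p) (hp1 : p < 1) (hN : 0 < N)
    (hvar : N * p * (1 - p) ≤ y ^ 2) (hy : 2 * y + 1 ≤ N) :
    (2 * y + 1) / (2 * (N * p * (1 - p))) - 2 / N ≤
      y / (N * (1 - p)) + (y / (N * (1 - p))) ^ 2 / 2 +
        (y + 1) / (N * p) - ((y + 1) / (N * p)) ^ 2 / 2 := by
  have hq := sub_pos.2 hp1
  have : 0 < p := by linarith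
  have gain_nonneg : 0 ≤ (2 * p - 1) * (y ^ 2 - N * p * (1 - p)) / (2 * (N * p * (1 - p)) ^ 2) :=
    div_nonneg (mul_nonneg (by linarith) (sub_nonneg.2 hvar)) (by positivity)
  have loss_le : (2 * y + 1) / (2 * (N * p) ^ 2) ≤ 2 / N := by
    rw [div_le_div_iff₀ (by positivity) hN]
    nlinarith [mul_le_mul_of_nonneg_right hy hN.le, sq_nonneg N,
      mul_nonneg (sq_nonneg N) (show 0 ≤ 4 * p ^ 2 - 1 by nlinarith)]
  have expansion : y / (N * (1 - p)) + (y / (N * (1 - p))) ^ 2 / 2 +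
        (y + 1) / (N * p) - ((y + 1) / (N * p)) ^ 2 / 2 =
      (2 * y + 1) / (2 * (N * p * (1 - p))) +
        (2 * p - 1) * (y ^ 2 - N * p * (1 - p)) / (2 * (N * p * (1 - p)) ^ 2) -
        (2 * y + 1) / (2 * (N * p) ^ 2) := by
    field_simp
    ring
  linarith

lemma binGaussRatio_succ_le (hp : 1 / 2 ≤ p) (hp1 : p < 1) (hk : k < n) (hz : 1 ≤ zpt p n k) :
    binGaussRatio p n (k + 1) ≤ binGaussRatio p n k * Real.exp (2 / n) := by
  have hp0 : 0 < p := by linarith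
  have hq := sub_pos.2 hp1
  have hn := Nat.zero_lt_of_lt hk
  have hn' : (0 : ℝ) < n := mod_cast hn
  have hkn : (k : ℝ) + 1 ≤ n := mod_cast hk
  have hmean : n * p ≤ k := mod_cast mean_le_of_zpt_nonneg hp0 hp1 hn (zero_le_one.trans hz)
  have hvar : n * p * (1 - p) ≤ (k - n * p) ^ 2 := by
    rw [one_le_zpt_iff hp0 hp1 hn, Int.cast_natCast] at hz
    exact (Real.sqrt_le_left (sub_nonneg.2 hmean)).1 hz
  have exponent_le := gaussian_exponent_le hp hp1 hn' hvar (by nlinarith)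
  have sq_sub := sq_zpt_add_one_sub hp0.le hp1.le n k
  rw [Int.cast_natCast] at sq_sub
  rw [binGaussRatio_eq_mul_exp, binGaussRatio_eq_mul_exp, mul_assoc, mul_assoc, ← Real.exp_add]
  gcongr √(2 * Real.pi) * ?_
  refine (mul_le_mul_of_nonneg_right (binProb_succ_le_mul_exp hp0 hp1 hk hmean)
    (Real.exp_nonneg _)).trans ?_
  rw [mul_assoc, ← Real.exp_add]
  refine mul_le_mul_of_nonneg_left (Real.exp_le_exp.2 ?_) (binProb_nonneg hp0.le hp1.le n k)
  rw [mul_comm 2 (n * p * (1 - p)), ← div_div, ← sq_sub] at exponent_le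
  push_cast
  linarith

lemma binGaussRatio_le_mul_exp (hp : 1 / 2 ≤ p) (hp1 : p < 1) (hmk : m ≤ k) (hk : k ≤ n)
    (hz : 1 ≤ zpt p n m) :
    binGaussRatio p n k ≤ binGaussRatio p n m * Real.exp (2 * (k - m) / n) := by
  induction k, hmk using Nat.le_induction with
  | base => simp
  | succ k hmk ih =>
    have hzk : 1 ≤ zpt p n k := hz.trans (monotone_zpt p n (mod_cast hmk))
    calc binGaussRatio p n (k + 1)
        ≤ binGaussRatio p n k * Real.exp (2 / n) := binGaussRatio_succ_le hp hp1 hk hzk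
      _ ≤ binGaussRatio p n m * Real.exp (2 * (k - m) / n) * Real.exp (2 / n) := by
          gcongr; exact ih (by omega)
      _ = binGaussRatio p n m * Real.exp (2 * ((k + 1 : ℕ) - m) / n) := by
          rw [mul_assoc, ← Real.exp_add]
          push_cast
          ring_nf

lemma binGaussRatio_le_of_zpt_le {c : ℝ} (hp0 : 0 < p) (hp1 : p < 1) (hn : 0 < n) (hk : k ≤ n)
    (hz : 1 ≤ zpt p n k) (hzc : zpt p n k ≤ c) :
    binGaussRatio p n k ≤ √(2 * Real.pi) * Real.exp (c ^ 2 / 2) / √(n * p * (1 - p)) := by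
  have hs := sqrt_variance_pos hp0 hp1 hn
  have hf := binProb_nonneg hp0.le hp1.le n k
  have hmean : n * p ≤ k := mod_cast mean_le_of_zpt_nonneg hp0 hp1 hn (zero_le_one.trans hz)
  have binProb_le : binProb p n k ≤ 1 / √(n * p * (1 - p)) := by
    rw [le_div_iff₀ hs]
    refine le_trans ?_ (binProb_mul_sub_le_one hp0.le hp1 hk hmean)
    gcongr
    exact mod_cast (one_le_zpt_iff hp0 hp1 hn k).1 hz
  calc binGaussRatio p n k
      = √(2 * Real.pi) * (binProb p n k * Real.exp (zpt p n k ^ 2 / 2)) :=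
        binGaussRatio_eq_mul_exp p n k
    _ ≤ √(2 * Real.pi) * (1 / √(n * p * (1 - p)) * Real.exp (c ^ 2 / 2)) := by gcongr
    _ = √(2 * Real.pi) * Real.exp (c ^ 2 / 2) / √(n * p * (1 - p)) := by ring

lemma binGaussRatio_le (hp : 1 / 2 ≤ p) (hp1 : p < 1) (hn : 0 < n) (hk : k ≤ n)
    (hz : 1 ≤ zpt p n k) :
    binGaussRatio p n k ≤ √(2 * Real.pi) * Real.exp (13 / 2) / √(n * p * (1 - p)) := by
  have hp0 : 0 < p := by linarith
  have hs : 1 / 2 ≤ √(n * p * (1 - p)) :=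
    hp.trans (le_sqrt_variance_of_one_le_zpt hp0 hp1 hn hk hz)
  obtain ⟨m, hmk, hzm, hzm_le⟩ := exists_le_one_le_zpt_le hp0 hp1 hn hz
  have zpt_le_three : zpt p n m ≤ 3 := by
    have : 1 / √(n * p * (1 - p)) ≤ 1 / (1 / 2) := by gcongr
    linarith
  have growth_le : 2 * ((k : ℝ) - m) / n ≤ 2 := by
    have hkn : (k : ℝ) ≤ n := mod_cast hk
    rw [div_le_iff₀ (mod_cast hn)]
    linarith [Nat.cast_nonneg (α := ℝ) m]
  calc binGaussRatio p n k
      ≤ binGaussRatio p n m * Real.exp (2 * (k - m) / n) :=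
        binGaussRatio_le_mul_exp hp hp1 hmk hk hzm
    _ ≤ √(2 * Real.pi) * Real.exp (3 ^ 2 / 2) / √(n * p * (1 - p)) * Real.exp 2 := by
        gcongr
        exact binGaussRatio_le_of_zpt_le hp0 hp1 hn (hmk.trans hk) hzm zpt_le_three
    _ = √(2 * Real.pi) * Real.exp (13 / 2) / √(n * p * (1 - p)) := by
        rw [show (13 / 2 : ℝ) = 3 ^ 2 / 2 + 2 by norm_num, Real.exp_add]
        ring

end BinGaussRatio

section Tail

variable {p x : ℝ} {n k : ℕ}

lemma binProb_le_setIntegral_Ioc (hp : 1 / 2 ≤ p) (hp1 : p < 1) (hn : 0 < n) (hk : k ≤ n)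
    (hz : 1 ≤ zpt p n k) :
    binProb p n k ≤ √(2 * Real.pi) * Real.exp (21 / 2) *
      ∫ t in Set.Ioc (zpt p n k) (zpt p n (k + 1)), normalPdf t := by
  calc binProb p n k
      ≤ √(2 * Real.pi) * Real.exp (13 / 2) / √(n * p * (1 - p)) * normalPdf (zpt p n k) :=
        (div_le_iff₀ (normalPdf_pos _)).1 (binGaussRatio_le hp hp1 hn hk hz)
    _ = √(2 * Real.pi) * Real.exp (13 / 2) * (normalPdf (zpt p n k) / √(n * p * (1 - p))) := by
        ring
    _ ≤ √(2 * Real.pi) * Real.exp (13 / 2) *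
          (Real.exp 4 * ∫ t in Set.Ioc (zpt p n k) (zpt p n (k + 1)), normalPdf t) := by
        gcongr
        exact normalPdf_zpt_div_sqrt_le_setIntegral hp hp1 hn hk hz
    _ = √(2 * Real.pi) * Real.exp (21 / 2) *
          ∫ t in Set.Ioc (zpt p n k) (zpt p n (k + 1)), normalPdf t := by
        rw [show (21 / 2 : ℝ) = 13 / 2 + 4 by norm_num, Real.exp_add]
        ring

lemma sum_binProb_le_of_one_le (hp : 1 / 2 ≤ p) (hp1 : p < 1) (hn : 0 < n) (hx : 1 ≤ x) :
    ∑ k ∈ (Finset.range (n + 1)).filter (fun k : ℕ => x < zpt p n k), binProb p n k ≤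
      √(2 * Real.pi) * Real.exp (21 / 2) * ∫ t in Set.Ioi x, normalPdf t := by
  set F := (Finset.range (n + 1)).filter (fun k : ℕ => x < zpt p n k)
  have lt_zpt : ∀ k ∈ F, x < zpt p n k := fun k hk => (Finset.mem_filter.1 hk).2
  have le_n : ∀ k ∈ F, k ≤ n := fun k hk =>
    Finset.mem_range_succ_iff.1 (Finset.mem_filter.1 hk).1
  calc ∑ k ∈ F, binProb p n k
      ≤ ∑ k ∈ F, √(2 * Real.pi) * Real.exp (21 / 2) *
          ∫ t in Set.Ioc (zpt p n k) (zpt p n (k + 1)), normalPdf t :=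
        Finset.sum_le_sum fun k hk =>
          binProb_le_setIntegral_Ioc hp hp1 hn (le_n k hk) (hx.trans (lt_zpt k hk).le)
    _ = √(2 * Real.pi) * Real.exp (21 / 2) *
          ∑ k ∈ F, ∫ t in Set.Ioc (zpt p n k) (zpt p n (k + 1)), normalPdf t :=
        (Finset.mul_sum ..).symm
    _ ≤ √(2 * Real.pi) * Real.exp (21 / 2) * ∫ t in Set.Ioi x, normalPdf t := by
        gcongr
        exact mod_cast sum_setIntegral_Ioc_succ_le (z := fun k : ℕ => zpt p n k)
          integrable_normalPdf.integrableOn (fun t => (normalPdf_pos t).le)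
          ((monotone_zpt p n).comp Nat.mono_cast) (fun k hk => (lt_zpt k hk).le)

lemma sum_binProb_le_of_le_one (hp0 : 0 ≤ p) (hp1 : p ≤ 1) {F : Finset ℕ}
    (hF : F ⊆ Finset.range (n + 1)) (hx : x ≤ 1) :
    ∑ k ∈ F, binProb p n k ≤
      (∫ t in Set.Ioi 1, normalPdf t)⁻¹ * ∫ t in Set.Ioi x, normalPdf t :=
  calc ∑ k ∈ F, binProb p n k ≤ 1 := sum_binProb_le_one hp0 hp1 hF
    _ ≤ (∫ t in Set.Ioi 1, normalPdf t)⁻¹ * ∫ t in Set.Ioi x, normalPdf t := by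
        rw [← div_eq_inv_mul, one_le_div (setIntegral_Ioi_normalPdf_pos 1)]
        exact setIntegral_normalPdf_mono (Set.Ioi_subset_Ioi hx)

end Tail

theorem binomial_upper_tail_gaussian_domination_general :
    ∃ C > (0 : ℝ), ∀ p ∈ Set.Ico (1 / 2 : ℝ) 1, ∀ n : ℕ, 1 ≤ n → ∀ x : ℝ,
      ∑ k ∈ (Finset.range (n + 1)).filter (fun k : ℕ => x < zpt p n k), binProb p n k ≤
        C * ∫ t in Set.Ioi x, normalPdf t := by
  have tail_pos := setIntegral_Ioi_normalPdf_pos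
  refine ⟨max (√(2 * Real.pi) * Real.exp (21 / 2)) (∫ t in Set.Ioi 1, normalPdf t)⁻¹,
    lt_max_of_lt_left (by positivity), fun p ⟨hp, hp1⟩ n hn x => ?_⟩
  rcases le_total x 1 with hx | hx
  · refine (sum_binProb_le_of_le_one (by linarith) hp1.le (Finset.filter_subset _ _) hx).trans ?_
    exact mul_le_mul_of_nonneg_right (le_max_right _ _) (tail_pos x).le
  · refine (sum_binProb_le_of_one_le hp hp1 hn hx).trans ?_
    exact mul_le_mul_of_nonneg_right (le_max_left _ _) (tail_pos x).le

theorem binomial_upper_tail_gaussian_domination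
    (p : ℝ) (hp : p ∈ Set.Ico (1 / 2 : ℝ) 1) :
    ∃ C > (0 : ℝ), ∀ n : ℕ, 1 ≤ n → ∀ x : ℝ, 0 ≤ x →
      ∑ k ∈ (Finset.range (n + 1)).filter (fun k : ℕ => x < zpt p n k), binProb p n k ≤
        C * ∫ t in Set.Ioi x, normalPdf t := by
  obtain ⟨C, hC, tail_le⟩ := binomial_upper_tail_gaussian_domination_general
  exact ⟨C, hC, fun n hn x _ => tail_le p hp n hn x⟩
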